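/- arXiv:1806.11456 — 2 statements merged into one kernel-verified Lean document; each statement's English description precedes it below -/
import Mathlib

section
/- Conservative form of the transformed divergence: let Φ : ℝ³ → ℝ³ be twice continuously differentiable with covariant basis vectors aᵢ(ξ) = ∂Φ/∂ξᵢ(ξ) and Jacobian J(ξ) = det DΦ(ξ), and let f : ℝ³ → ℝ³ be continuously differentiable. Then for every ξ ∈ ℝ³, ∑_{(i,j,k) cyclic} ∂/∂ξᵢ [ (a_j ×₃ a_k) ⋅ (f ∘ Φ) ](ξ) = J(ξ) · (div f)(Φ(ξ)), where the sum runs over the three cyclic permutations (i,j,k) of (1,2,3), ⋅ is the Euclidean inner product on ℝ³, ×₃ is the cross product, and div f = ∂₁f₁ + ∂₂f₂ + ∂₃f₃. No invertibility of DΦ is required. -/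
open Matrix

/-!
Write `w = f ∘ Φ`. The `i`-th coordinate of `adj(DΦ) w` is, by Cramer's rule, the determinant of
`DΦ` with its `i`-th column `aᵢ` replaced by `w`; in dimension three it is the triple product of `w`
with the other two columns. Applied to `∑ᵢ ∂ᵢ det(a₁, …, w, …, aₙ)`, the product rule gives a term
for each pair `i ≠ j`, in which `w` stands in column `i` and `∂ᵢ aⱼ` in column `j`. Since
`∂ᵢ aⱼ = ∂ⱼ aᵢ`, the terms for `(i, j)` and `(j, i)` differ by a column swap and cancel. The
remaining terms, with `∂ᵢ w = Df aᵢ` in column `i`, add up to `tr (adj(DΦ) Df DΦ) = det DΦ · tr Df`.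
-/

open Finset Function

theorem sum_alternatingMap_update_update_eq_zero {R M N ι : Type*} [Semiring R]
    [AddCommMonoid M] [Module R M] [AddCommGroup N] [Module R N] [Fintype ι] [DecidableEq ι]
    (g : M [⋀^ι]→ₗ[R] N) (v : ι → M) (w : M) {s : ι → ι → M} (hs : ∀ i j, s i j = s j i) :
    ∑ i, ∑ j ∈ univ.erase i, g (update (update v i w) j (s i j)) = 0 := by
  have swap_cancel {i j : ι} (hij : i ≠ j) :
      g (update (update v i w) j (s i j)) + g (update (update v j w) i (s j i)) = 0 := by
    convert g.map_add_swap (update (update v i w) j (s i j)) hij using 3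
    rw [Equiv.comp_swap_eq_update, hs j i, update_self, update_of_ne hij, update_self,
      update_idem, update_comm hij, update_idem, update_comm hij.symm]
  rw [sum_sigma']
  refine sum_involution (fun p _ => ⟨p.2, p.1⟩) ?_ ?_ ?_ ?_
  · rintro ⟨i, j⟩ h
    exact swap_cancel (by simpa [eq_comm] using h)
  · rintro ⟨i, j⟩ h - hfixed
    exact absurd (congrArg Sigma.fst hfixed) (ne_of_mem_erase (mem_sigma.1 h).2)
  · rintro ⟨i, j⟩ h
    simpa [eq_comm] using h
  · rintro ⟨i, j⟩ -
    rfl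

theorem sum_det_updateCol_mulVec_col {R n : Type*} [CommRing R] [Fintype n] [DecidableEq n]
    (A B : Matrix n n R) : ∑ i, (A.updateCol i (B *ᵥ A.col i)).det = A.det * B.trace := by
  calc ∑ i, (A.updateCol i (B *ᵥ A.col i)).det
      = (A.adjugate * (B * A)).trace := by
        simp only [← cramer_apply, cramer_eq_adjugate_mulVec]
        rfl
    _ = A.det * B.trace := by
        rw [trace_mul_comm, Matrix.mul_assoc, mul_adjugate, Matrix.mul_smul, Matrix.mul_one,
          trace_smul, smul_eq_mul]

theorem adjugate_transpose_mulVec_fin_three {R : Type*} [CommRing R] (a : Fin 3 → Fin 3 → R)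
    (w : Fin 3 → R) :
    (of a)ᵀ.adjugate *ᵥ w =
      ![crossProduct (a 1) (a 2) ⬝ᵥ w, crossProduct (a 2) (a 0) ⬝ᵥ w,
        crossProduct (a 0) (a 1) ⬝ᵥ w] := by
  ext i
  fin_cases i <;>
    simp [adjugate_fin_three, cross_apply, mulVec] <;> ring

section Frame

variable {𝕜 E F G ι : Type*} [NontriviallyNormedField 𝕜]
  [NormedAddCommGroup E] [NormedSpace 𝕜 E] [NormedAddCommGroup F] [NormedSpace 𝕜 F]
  [NormedAddCommGroup G] [NormedSpace 𝕜 G] [Fintype ι] [DecidableEq ι]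
  {a : ι → E → F} {w : E → F} {ξ : E}

theorem fderiv_continuousMultilinearMap_update (g : ContinuousMultilinearMap 𝕜 (fun _ : ι => F) G)
    (ha : ∀ j, DifferentiableAt 𝕜 (a j) ξ) (hw : DifferentiableAt 𝕜 w ξ) (i : ι) (h : E) :
    fderiv 𝕜 (fun x => g (update (fun j => a j x) i (w x))) ξ h =
      g (update (fun j => a j ξ) i (fderiv 𝕜 w ξ h)) +
        ∑ j ∈ univ.erase i,
          g (update (update (fun j => a j ξ) i (w ξ)) j (fderiv 𝕜 (a j) ξ h)) := by
  have hupdate : HasFDerivAt (fun x => update (fun j => a j x) i (w x))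
      (ContinuousLinearMap.pi (update (fun j => fderiv 𝕜 (a j) ξ) i (fderiv 𝕜 w ξ))) ξ := by
    refine hasFDerivAt_pi.2 fun j => ?_
    rcases eq_or_ne j i with rfl | hji
    · simpa using hw.hasFDerivAt
    · simpa [hji] using (ha j).hasFDerivAt
  have hcomp : HasFDerivAt (fun x => g (update (fun j => a j x) i (w x))) _ ξ :=
    (g.hasFDerivAt (update (fun j => a j ξ) i (w ξ))).comp ξ hupdate
  rw [hcomp.fderiv, ContinuousLinearMap.comp_apply, ContinuousMultilinearMap.linearDeriv_apply,
    ← add_sum_erase _ _ (mem_univ i)]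
  congr 1
  · simp
  · refine sum_congr rfl fun j hj => ?_
    simp [ne_of_mem_erase hj]

theorem sum_fderiv_continuousAlternatingMap_update (g : F [⋀^ι]→L[𝕜] G) (e : ι → E)
    (ha : ∀ j, DifferentiableAt 𝕜 (a j) ξ) (hw : DifferentiableAt 𝕜 w ξ)
    (hsymm : ∀ i j, fderiv 𝕜 (a j) ξ (e i) = fderiv 𝕜 (a i) ξ (e j)) :
    ∑ i, fderiv 𝕜 (fun x => g (update (fun j => a j x) i (w x))) ξ (e i) =
      ∑ i, g (update (fun j => a j ξ) i (fderiv 𝕜 w ξ (e i))) := by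
  calc ∑ i, fderiv 𝕜 (fun x => g (update (fun j => a j x) i (w x))) ξ (e i)
      = ∑ i, (g (update (fun j => a j ξ) i (fderiv 𝕜 w ξ (e i))) +
          ∑ j ∈ univ.erase i,
            g (update (update (fun j => a j ξ) i (w ξ)) j (fderiv 𝕜 (a j) ξ (e i)))) :=
        sum_congr rfl fun i _ =>
          fderiv_continuousMultilinearMap_update g.toContinuousMultilinearMap ha hw i (e i)
    _ = ∑ i, g (update (fun j => a j ξ) i (fderiv 𝕜 w ξ (e i))) := by
        rw [sum_add_distrib, add_eq_left]
        exact sum_alternatingMap_update_update_eq_zero g.toAlternatingMap _ _ hsymm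

end Frame

section Piola

variable {𝕜 : Type*} [NontriviallyNormedField 𝕜]

theorem sum_fderiv_adjugate_mulVec {E ι : Type*} [NormedAddCommGroup E] [NormedSpace 𝕜 E]
    [Fintype ι] [DecidableEq ι] {A : E → Matrix ι ι 𝕜} {w : E → ι → 𝕜} {ξ : E} (e : ι → E)
    (hA : ∀ j, DifferentiableAt 𝕜 (fun x => (A x).col j) ξ) (hw : DifferentiableAt 𝕜 w ξ)
    (hsymm : ∀ i j, fderiv 𝕜 (fun x => (A x).col j) ξ (e i) =
      fderiv 𝕜 (fun x => (A x).col i) ξ (e j)) :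
    ∑ i, fderiv 𝕜 (fun x => ((A x).adjugate *ᵥ w x) i) ξ (e i) =
      ∑ i, ((A ξ).updateCol i (fderiv 𝕜 w ξ (e i))).det := by
  let detForm : (ι → 𝕜) [⋀^ι]→L[𝕜] 𝕜 :=
    { (detRowAlternating : (ι → 𝕜) [⋀^ι]→ₗ[𝕜] 𝕜) with cont := continuous_id.matrix_det }
  have det_updateCol (B : Matrix ι ι 𝕜) (i : ι) (v : ι → 𝕜) :
      (B.updateCol i v).det = detForm (update B.col i v) := by
    rw [← det_transpose, ← updateRow_transpose]
    rfl
  simp only [← cramer_eq_adjugate_mulVec, cramer_apply, det_updateCol]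
  exact sum_fderiv_continuousAlternatingMap_update detForm e hA hw hsymm

variable {m n : Type*} [Fintype n] [DecidableEq n]

/-- The Jacobian matrix of `Φ` at `x`: its columns are the covariant basis vectors `∂Φ/∂xⱼ` and,
for `m = n`, its determinant is the Jacobian of the change of variables. As with `fderiv`, it is
zero where `Φ` is not differentiable. -/
noncomputable def jacobianMatrix (Φ : (n → 𝕜) → m → 𝕜) (x : n → 𝕜) : Matrix m n 𝕜 :=
  LinearMap.toMatrix' (fderiv 𝕜 Φ x : (n → 𝕜) →ₗ[𝕜] m → 𝕜)

theorem jacobianMatrix_mulVec (Φ : (n → 𝕜) → m → 𝕜) (x v : n → 𝕜) :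
    jacobianMatrix Φ x *ᵥ v = fderiv 𝕜 Φ x v :=
  LinearMap.toMatrix'_mulVec _ _

theorem col_jacobianMatrix (Φ : (n → 𝕜) → m → 𝕜) (x : n → 𝕜) (j : n) :
    (jacobianMatrix Φ x).col j = fderiv 𝕜 Φ x (Pi.single j 1) := by
  rw [← jacobianMatrix_mulVec, mulVec_single_one]

theorem trace_jacobianMatrix {f : (n → 𝕜) → n → 𝕜} {y : n → 𝕜} (hf : DifferentiableAt 𝕜 f y) :
    (jacobianMatrix f y).trace = ∑ i, fderiv 𝕜 (fun z => f z i) y (Pi.single i 1) := by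
  refine sum_congr rfl fun i _ => ?_
  rw [fderiv_apply hf]
  exact congrFun (col_jacobianMatrix f y i) i

theorem differentiableAt_col_jacobianMatrix [Finite m] {Φ : (n → 𝕜) → m → 𝕜} {ξ : n → 𝕜}
    (hΦ : DifferentiableAt 𝕜 (fderiv 𝕜 Φ) ξ) (j : n) :
    DifferentiableAt 𝕜 (fun x => (jacobianMatrix Φ x).col j) ξ := by
  have := Fintype.ofFinite m
  simp only [col_jacobianMatrix]
  exact hΦ.clm_apply (differentiableAt_const _)

theorem fderiv_col_jacobianMatrix_comm [Fintype m] {Φ : (n → 𝕜) → m → 𝕜} {ξ : n → 𝕜}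
    (hΦ : DifferentiableAt 𝕜 (fderiv 𝕜 Φ) ξ) (hsymm : IsSymmSndFDerivAt 𝕜 Φ ξ) (i j : n) :
    fderiv 𝕜 (fun x => (jacobianMatrix Φ x).col j) ξ (Pi.single i 1) =
      fderiv 𝕜 (fun x => (jacobianMatrix Φ x).col i) ξ (Pi.single j 1) := by
  simpa [col_jacobianMatrix, fderiv_clm_apply hΦ (differentiableAt_const _)] using
    hsymm (Pi.single i 1) (Pi.single j 1)

theorem cyclic_sum_deriv_cross_dot_eq_jacobian_mul_div_general
    {Φ f : (n → 𝕜) → n → 𝕜} {ξ : n → 𝕜} (hΦ : ContDiffAt 𝕜 (minSmoothness 𝕜 2) Φ ξ)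
    (hf : DifferentiableAt 𝕜 f (Φ ξ)) :
    ∑ i, fderiv 𝕜 (fun x => ((jacobianMatrix Φ x).adjugate *ᵥ f (Φ x)) i) ξ (Pi.single i 1) =
      (jacobianMatrix Φ ξ).det * ∑ i, fderiv 𝕜 (fun y => f y i) (Φ ξ) (Pi.single i 1) := by
  have hΦ₂ : ContDiffAt 𝕜 2 Φ ξ := hΦ.of_le le_minSmoothness
  have hΦ₁ : DifferentiableAt 𝕜 Φ ξ := hΦ₂.differentiableAt (by norm_num)
  have hDΦ : DifferentiableAt 𝕜 (fderiv 𝕜 Φ) ξ :=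
    (hΦ₂.fderiv_right (m := 1) (by norm_num)).differentiableAt (by norm_num)
  have hfΦ : DifferentiableAt 𝕜 (fun x => f (Φ x)) ξ := hf.comp ξ hΦ₁
  have hchain (i : n) : fderiv 𝕜 (fun x => f (Φ x)) ξ (Pi.single i 1) =
      jacobianMatrix f (Φ ξ) *ᵥ (jacobianMatrix Φ ξ).col i := by
    rw [col_jacobianMatrix, jacobianMatrix_mulVec, fderiv_fun_comp ξ hf hΦ₁,
      ContinuousLinearMap.comp_apply]
  calc ∑ i, fderiv 𝕜 (fun x => ((jacobianMatrix Φ x).adjugate *ᵥ f (Φ x)) i) ξ (Pi.single i 1)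
      = ∑ i, ((jacobianMatrix Φ ξ).updateCol i
          (fderiv 𝕜 (fun x => f (Φ x)) ξ (Pi.single i 1))).det :=
        sum_fderiv_adjugate_mulVec _ (differentiableAt_col_jacobianMatrix hDΦ) hfΦ
          (fderiv_col_jacobianMatrix_comm hDΦ (hΦ.isSymmSndFDerivAt le_rfl))
    _ = (jacobianMatrix Φ ξ).det * (jacobianMatrix f (Φ ξ)).trace := by
        simp only [hchain, sum_det_updateCol_mulVec_col]
    _ = (jacobianMatrix Φ ξ).det * ∑ i, fderiv 𝕜 (fun y => f y i) (Φ ξ) (Pi.single i 1) := by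
        rw [trace_jacobianMatrix hf]

end Piola

/-- **Conservative form of the transformed divergence.**
Let `Φ : ℝ³ → ℝ³` be C² with covariant basis vectors `aᵢ(ξ) = ∂Φ/∂ξᵢ(ξ)` (the columns
of the Jacobian matrix) and Jacobian determinant `J(ξ) = det DΦ(ξ)`, and let
`f : ℝ³ → ℝ³` be C¹. Then for every `ξ`,
`∑_{(i,j,k) cyclic} ∂/∂ξᵢ [ (a_j ×₃ a_k) ⋅ (f ∘ Φ) ](ξ) = J(ξ) · (div f)(Φ(ξ))`,
where the cyclic permutations of `(0,1,2)` are `(0,1,2), (1,2,0), (2,0,1)`.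
No invertibility of `DΦ` is required. -/
theorem cyclic_sum_deriv_cross_dot_eq_jacobian_mul_div
    (Φ : (Fin 3 → ℝ) → (Fin 3 → ℝ)) (hΦ : ContDiff ℝ 2 Φ)
    (f : (Fin 3 → ℝ) → (Fin 3 → ℝ)) (hf : ContDiff ℝ 1 f)
    (a : Fin 3 → (Fin 3 → ℝ) → (Fin 3 → ℝ))
    (ha : ∀ i ξ, a i ξ = fderiv ℝ Φ ξ (Pi.single i 1))
    (J : (Fin 3 → ℝ) → ℝ)
    (hJ : ∀ ξ, J ξ = (Matrix.of fun r c => fderiv ℝ Φ ξ (Pi.single c 1) r).det)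
    (ξ : Fin 3 → ℝ) :
    fderiv ℝ (fun x => crossProduct (a 1 x) (a 2 x) ⬝ᵥ f (Φ x)) ξ (Pi.single 0 1)
      + fderiv ℝ (fun x => crossProduct (a 2 x) (a 0 x) ⬝ᵥ f (Φ x)) ξ (Pi.single 1 1)
      + fderiv ℝ (fun x => crossProduct (a 0 x) (a 1 x) ⬝ᵥ f (Φ x)) ξ (Pi.single 2 1)
      = J ξ * ∑ i : Fin 3, fderiv ℝ (fun y => f y i) (Φ ξ) (Pi.single i 1) := by
  have hjac (x : Fin 3 → ℝ) : jacobianMatrix Φ x = (of fun i => a i x)ᵀ := by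
    ext r c
    exact congrFun ((col_jacobianMatrix Φ x c).trans (ha c x).symm) r
  have hdet : J ξ = (of fun i => a i ξ)ᵀ.det := by
    rw [hJ]
    simp only [← ha]
    rfl
  simpa [hjac, hdet, Fin.sum_univ_three, adjugate_transpose_mulVec_fin_three] using
    cyclic_sum_deriv_cross_dot_eq_jacobian_mul_div_general
      (hΦ.contDiffAt.of_le (by simp)) (hf.differentiable (by norm_num) (Φ ξ))
end

section
/- Conservative form of the transformed gradient: let Φ : ℝ³ → ℝ³ be twice continuously differentiable with covariant basis vectors aᵢ(ξ) = ∂Φ/∂ξᵢ(ξ) and Jacobian J(ξ) = det DΦ(ξ), and let q : ℝ³ → ℝ be continuously differentiable. Then for every ξ ∈ ℝ³, ∑_{(i,j,k) cyclic} ∂/∂ξᵢ [ (a_j ×₃ a_k) · (q ∘ Φ) ](ξ) = J(ξ) • (∇q)(Φ(ξ)) as vectors in ℝ³, where the sum runs over the three cyclic permutations (i,j,k) of (1,2,3), (a_j ×₃ a_k) · (q∘Φ) denotes the vector a_j ×₃ a_k scaled by the scalar (q∘Φ)(ξ), and ∇q is the gradient of q. No invertibility of DΦ is required. -/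
/-!
The fields `a_j × a_k` are the rows of the adjugate of `DΦ`. Their cyclic divergence vanishes (the
Piola identity): the product rule expresses it through the terms `∂ᵢa_j × a_k` and `a_j × ∂ᵢa_k`,
which cancel in pairs since `∂ᵢa_j = ∂_j aᵢ` and the cross product is anticommutative. Hence only
the derivatives of `q ∘ Φ` contribute; by the chain rule they are `∇q · aᵢ`, and
`DΦ * adj DΦ = J • 1` recombines them into `J • ∇q`.
-/

open Matrix

section Algebra

variable {R : Type*} [CommRing R]

theorem sum_apply_col_smul_row_adjugate {n : Type*} [Fintype n] [DecidableEq n]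
    (A : Matrix n n R) (l : (n → R) →ₗ[R] R) :
    ∑ i, l (A.col i) • A.adjugate.row i = A.det • fun r => l (Pi.single r 1) := by
  ext r
  calc
    (∑ i, l (A.col i) • A.adjugate.row i) r = l (∑ i, A.adjugate i r • A.col i) := by
      simp [mul_comm]
    _ = l (A *ᵥ A.adjugate *ᵥ Pi.single r 1) := by
      rw [mulVec_single_one, mulVec_eq_sum]
      simp only [op_smul_eq_smul]
      rfl
    _ = A.det * l (Pi.single r 1) := by
      rw [mulVec_mulVec, mul_adjugate, smul_mulVec, one_mulVec, map_smul, smul_eq_mul]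

theorem row_adjugate_eq_cross_col (A : Matrix (Fin 3) (Fin 3) R) (i : Fin 3) :
    A.adjugate.row i = A.col (i + 1) ⨯₃ A.col (i + 2) := by
  ext j
  fin_cases i <;> fin_cases j <;> simp [adjugate_fin_three, cross_apply] <;> ring

theorem sum_cross_add_cross_eq_zero_of_symm (a : Fin 3 → Fin 3 → R)
    {s : Fin 3 → Fin 3 → Fin 3 → R} (hs : ∀ i j, s i j = s j i) :
    ∑ i, (s i (i + 1) ⨯₃ a (i + 2) + a (i + 1) ⨯₃ s i (i + 2)) = 0 := by
  have hshift : ∑ i, a (i + 1) ⨯₃ s i (i + 2) = ∑ i, a (i + 2) ⨯₃ s (i + 1) i := by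
    rw [← Equiv.sum_comp (Equiv.addRight 1)]
    refine Finset.sum_congr rfl fun i _ => ?_
    fin_cases i <;> rfl
  rw [Finset.sum_add_distrib, hshift, ← Finset.sum_add_distrib]
  refine Finset.sum_eq_zero fun i _ => ?_
  rw [hs (i + 1) i, cross_anticomm']

end Algebra

section Calculus

variable {𝕜 : Type*} [NontriviallyNormedField 𝕜]
  {E : Type*} [NormedAddCommGroup E] [NormedSpace 𝕜 E]

theorem fderiv_fderiv_apply {F : Type*} [NormedAddCommGroup F] [NormedSpace 𝕜 F]
    {f : E → F} {x : E} (hf : DifferentiableAt 𝕜 (fderiv 𝕜 f) x) (v w : E) :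
    fderiv 𝕜 (fun y => fderiv 𝕜 f y v) x w = fderiv 𝕜 (fderiv 𝕜 f) x w v := by
  simp [fderiv_clm_apply hf (differentiableAt_const v)]

variable [CompleteSpace 𝕜]

section Cross

variable {u v : E → Fin 3 → 𝕜} {x : E}

theorem hasFDerivAt_cross {u' v' : E →L[𝕜] Fin 3 → 𝕜}
    (hu : HasFDerivAt u u' x) (hv : HasFDerivAt v v' x) :
    HasFDerivAt (fun y => u y ⨯₃ v y)
      ((crossProduct (R := 𝕜)).toContinuousBilinearMap.precompR E (u x) v' +
        (crossProduct (R := 𝕜)).toContinuousBilinearMap.precompL E u' (v x)) x :=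
  (crossProduct (R := 𝕜)).toContinuousBilinearMap.hasFDerivAt_of_bilinear hu hv

theorem differentiableAt_cross (hu : DifferentiableAt 𝕜 u x) (hv : DifferentiableAt 𝕜 v x) :
    DifferentiableAt 𝕜 (fun y => u y ⨯₃ v y) x :=
  (hasFDerivAt_cross hu.hasFDerivAt hv.hasFDerivAt).differentiableAt

theorem fderiv_cross_apply (hu : DifferentiableAt 𝕜 u x) (hv : DifferentiableAt 𝕜 v x) (h : E) :
    fderiv 𝕜 (fun y => u y ⨯₃ v y) x h =
      fderiv 𝕜 u x h ⨯₃ v x + u x ⨯₃ fderiv 𝕜 v x h := by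
  rw [(hasFDerivAt_cross hu.hasFDerivAt hv.hasFDerivAt).fderiv, add_comm]
  rfl

end Cross

variable {Φ : E → Fin 3 → 𝕜} {ξ : E}

theorem sum_fderiv_cross_fderiv_eq_zero (hΦ : DifferentiableAt 𝕜 (fderiv 𝕜 Φ) ξ)
    (hsymm : IsSymmSndFDerivAt 𝕜 Φ ξ) (v : Fin 3 → E) :
    ∑ i, fderiv 𝕜 (fun x => fderiv 𝕜 Φ x (v (i + 1)) ⨯₃ fderiv 𝕜 Φ x (v (i + 2))) ξ (v i) =
      0 := by
  have hd (w : E) : DifferentiableAt 𝕜 (fun x => fderiv 𝕜 Φ x w) ξ := by fun_prop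
  simp only [fderiv_cross_apply (hd _) (hd _), fderiv_fderiv_apply hΦ]
  exact sum_cross_add_cross_eq_zero_of_symm (fun i => fderiv 𝕜 Φ ξ (v i))
    (s := fun i j => fderiv 𝕜 (fderiv 𝕜 Φ) ξ (v i) (v j)) fun i j => hsymm.eq (v i) (v j)

theorem sum_fderiv_smul_cross_fderiv {f : E → 𝕜} (hf : DifferentiableAt 𝕜 f ξ)
    (hΦ : DifferentiableAt 𝕜 (fderiv 𝕜 Φ) ξ) (hsymm : IsSymmSndFDerivAt 𝕜 Φ ξ)
    (v : Fin 3 → E) :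
    ∑ i, fderiv 𝕜 (fun x => f x •
        (fderiv 𝕜 Φ x (v (i + 1)) ⨯₃ fderiv 𝕜 Φ x (v (i + 2)))) ξ (v i) =
      ∑ i, fderiv 𝕜 f ξ (v i) •
        (fderiv 𝕜 Φ ξ (v (i + 1)) ⨯₃ fderiv 𝕜 Φ ξ (v (i + 2))) := by
  have hd (w : E) : DifferentiableAt 𝕜 (fun x => fderiv 𝕜 Φ x w) ξ := by fun_prop
  simp only [fderiv_fun_smul hf (differentiableAt_cross (hd _) (hd _)), _root_.add_apply,
    _root_.smul_apply, ContinuousLinearMap.smulRight_apply, Finset.sum_add_distrib,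
    ← Finset.smul_sum]
  rw [sum_fderiv_cross_fderiv_eq_zero hΦ hsymm v, smul_zero, zero_add]

theorem cyclic_sum_deriv_cross_smul_eq_jacobian_smul_grad_general {n : WithTop ℕ∞}
    (hΦ : ContDiffAt 𝕜 n Φ ξ) (hn : minSmoothness 𝕜 2 ≤ n) {q : (Fin 3 → 𝕜) → 𝕜}
    (hq : DifferentiableAt 𝕜 q (Φ ξ)) (v : Fin 3 → E) :
    ∑ i, fderiv 𝕜 (fun x => q (Φ x) •
        (fderiv 𝕜 Φ x (v (i + 1)) ⨯₃ fderiv 𝕜 Φ x (v (i + 2)))) ξ (v i) =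
      (of fun r c => fderiv 𝕜 Φ ξ (v c) r).det •
        fun i => fderiv 𝕜 q (Φ ξ) (Pi.single i 1) := by
  have hΦ₂ : ContDiffAt 𝕜 2 Φ ξ := hΦ.of_le (le_minSmoothness.trans hn)
  have hdΦ : DifferentiableAt 𝕜 Φ ξ := hΦ₂.differentiableAt two_ne_zero
  have hddΦ : DifferentiableAt 𝕜 (fderiv 𝕜 Φ) ξ :=
    (hΦ₂.fderiv_right one_add_one_eq_two.le).differentiableAt one_ne_zero
  set A : Matrix (Fin 3) (Fin 3) 𝕜 := of fun r c => fderiv 𝕜 Φ ξ (v c) r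
  have hchain (i : Fin 3) :
      fderiv 𝕜 (fun x => q (Φ x)) ξ (v i) = fderiv 𝕜 q (Φ ξ) (A.col i) :=
    DFunLike.congr_fun (fderiv_fun_comp ξ hq hdΦ) (v i)
  calc
    _ = ∑ i, fderiv 𝕜 (fun x => q (Φ x)) ξ (v i) • (A.col (i + 1) ⨯₃ A.col (i + 2)) :=
      sum_fderiv_smul_cross_fderiv (hq.comp ξ hdΦ) hddΦ (hΦ.isSymmSndFDerivAt hn) v
    _ = ∑ i, fderiv 𝕜 q (Φ ξ) (A.col i) • A.adjugate.row i := by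
      simp only [hchain, row_adjugate_eq_cross_col]
    _ = A.det • fun i => fderiv 𝕜 q (Φ ξ) (Pi.single i 1) :=
      sum_apply_col_smul_row_adjugate A (fderiv 𝕜 q (Φ ξ)).toLinearMap

end Calculus

/-- **Conservative form of the transformed gradient.**
Let `Φ : ℝ³ → ℝ³` be C² with covariant basis vectors `aᵢ(ξ) = ∂Φ/∂ξᵢ(ξ)` (the columns
of the Jacobian matrix) and Jacobian determinant `J(ξ) = det DΦ(ξ)`, and let
`q : ℝ³ → ℝ` be C¹. Then for every `ξ`,
`∑_{(i,j,k) cyclic} ∂/∂ξᵢ [ (a_j ×₃ a_k) · (q ∘ Φ) ](ξ) = J(ξ) • (∇q)(Φ(ξ))`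
as vectors in ℝ³, where `(a_j ×₃ a_k) · (q ∘ Φ)` is the vector `a_j ×₃ a_k` scaled by
the scalar `(q ∘ Φ)(ξ)`, the outer partial derivatives are taken componentwise, and
the cyclic permutations of `(0,1,2)` are `(0,1,2), (1,2,0), (2,0,1)`.
No invertibility of `DΦ` is required. -/
theorem cyclic_sum_deriv_cross_smul_eq_jacobian_smul_grad
    (Φ : (Fin 3 → ℝ) → (Fin 3 → ℝ)) (hΦ : ContDiff ℝ 2 Φ)
    (q : (Fin 3 → ℝ) → ℝ) (hq : ContDiff ℝ 1 q)
    (a : Fin 3 → (Fin 3 → ℝ) → (Fin 3 → ℝ))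
    (ha : ∀ i ξ, a i ξ = fderiv ℝ Φ ξ (Pi.single i 1))
    (J : (Fin 3 → ℝ) → ℝ)
    (hJ : ∀ ξ, J ξ = (Matrix.of fun r c => fderiv ℝ Φ ξ (Pi.single c 1) r).det)
    (ξ : Fin 3 → ℝ) :
    fderiv ℝ (fun x => q (Φ x) • crossProduct (a 1 x) (a 2 x)) ξ (Pi.single 0 1)
      + fderiv ℝ (fun x => q (Φ x) • crossProduct (a 2 x) (a 0 x)) ξ (Pi.single 1 1)
      + fderiv ℝ (fun x => q (Φ x) • crossProduct (a 0 x) (a 1 x)) ξ (Pi.single 2 1)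
      = J ξ • fun i : Fin 3 => fderiv ℝ q (Φ ξ) (Pi.single i 1) := by
  obtain rfl : a = fun i x => fderiv ℝ Φ x (Pi.single i 1) := funext₂ ha
  rw [hJ]
  exact (Fin.sum_univ_three _).symm.trans <|
    cyclic_sum_deriv_cross_smul_eq_jacobian_smul_grad_general hΦ.contDiffAt
      minSmoothness_of_isRCLikeNormedField.le (hq.differentiable one_ne_zero _) (Pi.single · 1)
end
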